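/- arXiv:2605.27197 — 2 statements merged into one kernel-verified Lean document; each statement's English description precedes it below -/
import Mathlib

section
/- For any μ₊, μ₋ ∈ Λ, the shifted twisted quantum affine algebra U_q^{μ₊,μ₋}(ĝ^σ) depends, up to isomorphism, only on the sum μ = μ₊ + μ₋; more precisely, there is an algebra isomorphism U_q^{μ₊,μ₋}(ĝ^σ) ≅ U_q^{0,μ₊+μ₋}(ĝ^σ). -/
/-!
Translating the modes of the currents identifies the two presentations. For `ν : I₀ → ℤ` with
`N_i ∣ ν_i`, the substitution `x^+_{i,r} ↦ x^+_{i,r+ν_i}`, `x^-_{i,r} ↦ x^-_{i,r}`,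
`φ^±_{i,r} ↦ φ^±_{i,r+ν_i}`, `h_{i,m} ↦ h_{i,m}` of the free algebra carries every defining
relation for the shifts `(μ₊, μ₋)` to a defining relation of the same kind for `(μ₊ - ν, μ₋ + ν)`
(`rel_shift`): all the relations are homogeneous in the modes, `φ^±_{i,r+r'}` occurs in
`[x^+_{i,r}, x^-_{i,r'}]` and so moves along with `x^+_{i,r}`, and the divisibility of `ν_i` keeps
the support conditions on the modes of `x^+_i`. The substitution for `-ν` is the inverse, hence
both descend to mutually inverse maps of the quotients. The theorem is the case `ν = μ₊`.
-/

noncomputable section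

open scoped TensorProduct

/-- The combinatorial and numerical data underlying a twisted quantum affine algebra:
a simply-laced Dynkin diagram with an automorphism `σ` of order `M ∈ {2,3}`, a set `I0`
of representatives of the `σ`-orbits, the Cartan entries `C_{i,σ^s(j)}`, the Cartan matrix
of the finite type Lie algebra `𝔤^σ`, and the quantum parameters. -/
structure TQAData where
  /-- representatives of the `σ`-orbits of Dynkin nodes -/
  I0 : Type
  finI0 : Fintype I0
  deqI0 : DecidableEq I0
  /-- order of the diagram automorphism `σ` -/
  M : ℕ
  hM : M = 2 ∨ M = 3
  /-- whether a node is fixed by `σ` -/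
  fixed : I0 → Bool
  /-- `Cs i j s` is the Cartan entry `C_{i,σ^{s+1}(j)}` of `𝔤`, for `0 ≤ s < M` -/
  Cs : I0 → I0 → ℕ → ℤ
  /-- Cartan matrix `C^σ` of the finite type Lie algebra `𝔤^σ` -/
  Cfin : I0 → I0 → ℤ
  /-- the quantum parameter, not a root of unity -/
  q : ℂ
  hq0 : q ≠ 0
  hqroot : ∀ n : ℕ, 0 < n → q ^ n ≠ 1
  /-- a chosen square root of `q` -/
  sq : ℂ
  hsq : sq ^ 2 = q
  /-- the numbers `q_i = q^{d_i}` -/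
  qi : I0 → ℂ
  hqi0 : ∀ i, qi i ≠ 0
  hqi1 : ∀ i, qi i * qi i ≠ 1

attribute [instance] TQAData.finI0 TQAData.deqI0

namespace TQAData

variable (D : TQAData)

lemma Mpos : 0 < D.M := by rcases D.hM with h | h <;> omega

/-- `ζ = exp(2πi/M)`. -/
def ζ : ℂ := Complex.exp (2 * Real.pi * Complex.I / (D.M : ℂ))

/-- `N_i = M` if `σ(i) = i`, and `1` otherwise. -/
def N (i : D.I0) : ℕ := if D.fixed i then D.M else 1

/-- the Cartan entry `C_{i,j}` of `𝔤` (note `σ^M = id`). -/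
def Cij (i j : D.I0) : ℤ := D.Cs i j (D.M - 1)

/-- the Cartan entry `C_{i,σ(i)}` of `𝔤`. -/
def Ciσ (i : D.I0) : ℤ := D.Cs i i 0

/-- `q_i - q_i⁻¹`. -/
def qd (i : D.I0) : ℂ := D.qi i - (D.qi i)⁻¹

/-- The coefficient `(1/m) ∑_{s=1}^{M} [m C_{i,σ^s(j)} / d_i]_{q_i} ζ^{ms}` appearing
in the relation `[h_{i,m}, x^±_{j,r}] = ± (…) x^±_{j,m+r}`, where
`[m C/d_i]_{q_i} = (q^{mC} - q^{-mC})/(q_i - q_i⁻¹)`. -/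
def hxCoef (i j : D.I0) (m : ℤ) : ℂ :=
  (m : ℂ)⁻¹ * ∑ s ∈ Finset.range D.M,
    ((D.q ^ (m * D.Cs i j s) - D.q ^ (-(m * D.Cs i j s))) / D.qd i) *
      D.ζ ^ (m * ((s : ℤ) + 1))

/-- The coefficient `q^{2Md_{i,j}} + q^{-2Md_{i,j}}` in the Serre relations. -/
def serreC (i j : D.I0) : ℂ :=
  (if D.Ciσ i = 2 then D.q ^ D.M
    else if D.Ciσ i = 0 ∧ D.fixed j then D.q ^ D.M
    else if D.Ciσ i = 0 then D.q
    else D.sq) +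
  (if D.Ciσ i = 2 then D.q ^ D.M
    else if D.Ciσ i = 0 ∧ D.fixed j then D.q ^ D.M
    else if D.Ciσ i = 0 then D.q
    else D.sq)⁻¹

/-- `u₁`-exponents of the polynomials `P^±_{i,j}(u₁,u₂)` in the Serre relations. -/
def pa (i j : D.I0) (t : ℕ) : ℕ :=
  if D.Ciσ i = 0 ∧ D.fixed j then D.M - 1 - t
  else if D.Ciσ i = -1 then (if t = 0 then 1 else 0) else 0

/-- `u₂`-exponents of the polynomials `P^±_{i,j}(u₁,u₂)` in the Serre relations. -/
def pb (i j : D.I0) (t : ℕ) : ℕ :=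
  if D.Ciσ i = 0 ∧ D.fixed j then t
  else if D.Ciσ i = -1 then (if t = 0 then 0 else 1) else 0

/-- coefficients of the polynomials `P^±_{i,j}(u₁,u₂)` in the Serre relations
(`e = ±1` is the sign). -/
def pcoef (e : ℤ) (i j : D.I0) (t : ℕ) : ℂ :=
  if D.Ciσ i = 0 ∧ D.fixed j then
    (if t ≤ D.M - 1 then D.q ^ (e * 2 * ((D.M - 1 - t : ℕ) : ℤ)) else 0)
  else if D.Ciσ i = -1 then (if t = 0 then D.q ^ e else if t = 1 then 1 else 0)
  else (if t = 0 then 1 else 0)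

end TQAData

/-- Drinfeld generators: `x^+_{i,r}`, `x^-_{i,r}`, `φ^+_{i,r}`, `φ^-_{i,r}`,
the inverses of the leading coefficients of the Cartan currents, and `h_{i,m}`. -/
inductive TQAGen (D : TQAData) : Type
  | xp (i : D.I0) (r : ℤ)
  | xm (i : D.I0) (r : ℤ)
  | pp (i : D.I0) (r : ℤ)
  | pm (i : D.I0) (r : ℤ)
  | ppInv (i : D.I0)
  | pmInv (i : D.I0)
  | hh (i : D.I0) (m : ℤ)

namespace TQA

/-- the free algebra on the Drinfeld generators -/
abbrev FA (D : TQAData) := FreeAlgebra ℂ (TQAGen D)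

variable (D : TQAData)

def gXp (i : D.I0) (r : ℤ) : FA D := FreeAlgebra.ι ℂ (TQAGen.xp i r)
def gXm (i : D.I0) (r : ℤ) : FA D := FreeAlgebra.ι ℂ (TQAGen.xm i r)
def gPp (i : D.I0) (r : ℤ) : FA D := FreeAlgebra.ι ℂ (TQAGen.pp i r)
def gPm (i : D.I0) (r : ℤ) : FA D := FreeAlgebra.ι ℂ (TQAGen.pm i r)
def gPpInv (i : D.I0) : FA D := FreeAlgebra.ι ℂ (TQAGen.ppInv i)
def gPmInv (i : D.I0) : FA D := FreeAlgebra.ι ℂ (TQAGen.pmInv i)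
def gH (i : D.I0) (m : ℤ) : FA D := FreeAlgebra.ι ℂ (TQAGen.hh i m)

/-- the current `x^ε` for a sign `ε` (`true` = `+`). -/
def gX : Bool → D.I0 → ℤ → FA D
  | true => gXp D
  | false => gXm D

/-- sign attached to a Boolean -/
def sg (ε : Bool) : ℤ := if ε then 1 else -1

/-- Cartan generators -/
def IsCartanGen : TQAGen D → Prop
  | TQAGen.pp _ _ => True
  | TQAGen.pm _ _ => True
  | TQAGen.ppInv _ => True
  | TQAGen.pmInv _ => True
  | TQAGen.hh _ _ => True
  | _ => False

/-- The inner term of the Serre relation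
`x_j x_i x_i - (q^{2Md_{ij}}+q^{-2Md_{ij}}) x_i x_j x_i + x_i x_i x_j` in modes. -/
def serreS (ε : Bool) (i j : D.I0) (k n1 n2 : ℤ) : FA D :=
  gX D ε j k * gX D ε i n1 * gX D ε i n2
    - D.serreC i j • (gX D ε i n1 * gX D ε j k * gX D ε i n2)
    + gX D ε i n1 * gX D ε i n2 * gX D ε j k

variable (μp μm : D.I0 → ℤ)

/-- The defining relations of the shifted twisted quantum affine algebra
`𝒰_q^{μ₊,μ₋}(ĝ^σ)`, written in terms of the modes of the Drinfeld currents.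
The Cartan currents are
`φ_i^±(z) = z^{∓α_i(μ_±)} φ^±_{i,∓α_i(μ_±)} exp(±(q_i−q_i⁻¹) ∑_{m≥1} h_{i,±m} z^{±m})`,
with invertible leading coefficients; this is encoded by the support relations,
the invertibility relations, and the exponential recursions `pp_exp`/`pm_exp`. -/
inductive Rel : FA D → FA D → Prop
  | x_supp (ε : Bool) (i : D.I0) (r : ℤ) (hr : ¬ ((D.N i : ℤ) ∣ r)) :
      Rel (gX D ε i r) 0
  | h_supp (i : D.I0) (m : ℤ) (hm : ¬ ((D.N i : ℤ) ∣ m) ∨ m = 0) :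
      Rel (gH D i m) 0
  | pp_supp (i : D.I0) (r : ℤ) (hr : r < -μp i) : Rel (gPp D i r) 0
  | pm_supp (i : D.I0) (r : ℤ) (hr : μm i < r) : Rel (gPm D i r) 0
  | cartan_comm (a b : TQAGen D) (ha : IsCartanGen D a) (hb : IsCartanGen D b) :
      Rel (FreeAlgebra.ι ℂ a * FreeAlgebra.ι ℂ b) (FreeAlgebra.ι ℂ b * FreeAlgebra.ι ℂ a)
  | pp_inv_l (i : D.I0) : Rel (gPpInv D i * gPp D i (-μp i)) 1
  | pp_inv_r (i : D.I0) : Rel (gPp D i (-μp i) * gPpInv D i) 1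
  | pm_inv_l (i : D.I0) : Rel (gPmInv D i * gPm D i (μm i)) 1
  | pm_inv_r (i : D.I0) : Rel (gPm D i (μm i) * gPmInv D i) 1
  | pp_exp (i : D.I0) (m : ℕ) :
      Rel (((m : ℂ) + 1) • gPp D i (-μp i + (m + 1)))
        (D.qd i •
          ∑ k ∈ Finset.range (m + 1),
            ((k : ℂ) + 1) •
              (gH D i ((k : ℤ) + 1) * gPp D i (-μp i + (m + 1) - ((k : ℤ) + 1))))
  | pm_exp (i : D.I0) (m : ℕ) :
      Rel ((-((m : ℂ) + 1)) • gPm D i (μm i - (m + 1)))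
        (D.qd i •
          ∑ k ∈ Finset.range (m + 1),
            ((k : ℂ) + 1) •
              (gH D i (-((k : ℤ) + 1)) * gPm D i (μm i - (m + 1) + ((k : ℤ) + 1))))
  | lead_conj_p (ε : Bool) (i j : D.I0) (r : ℤ) :
      Rel (gPp D i (-μp i) * gX D ε j r)
        ((D.q ^ (sg ε * ∑ s ∈ Finset.range D.M, D.Cs i j s)) •
          (gX D ε j r * gPp D i (-μp i)))
  | lead_conj_m (ε : Bool) (i j : D.I0) (r : ℤ) :
      Rel (gPm D i (μm i) * gX D ε j r)
        ((D.q ^ (-(sg ε) * ∑ s ∈ Finset.range D.M, D.Cs i j s)) •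
          (gX D ε j r * gPm D i (μm i)))
  | h_x (ε : Bool) (i j : D.I0) (m r : ℤ) (hm : m ≠ 0) :
      Rel (gH D i m * gX D ε j r - gX D ε j r * gH D i m)
        ((((sg ε : ℤ) : ℂ) * D.hxCoef i j m) • gX D ε j (m + r))
  | xp_xm (i j : D.I0) (r r' : ℤ) :
      Rel (gXp D i r * gXm D j r' - gXm D j r' * gXp D i r)
        (if i = j ∧ ((D.N i : ℤ) ∣ r') then
            (D.qd i)⁻¹ • (gPp D i (r + r') - gPm D i (r + r'))
          else 0)
  | xx (ε : Bool) (i j : D.I0) (r r' : ℤ) :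
      Rel (∑ K : Finset (Fin D.M),
            ((-1 : ℂ) ^ K.card *
                ∏ s ∈ K, (D.ζ ^ ((s : ℕ) + 1) * D.q ^ (sg ε * D.Cs i j (s : ℕ)))) •
              (gX D ε i (r + (D.M : ℤ) - (K.card : ℤ)) * gX D ε j (r' + (K.card : ℤ))))
          (∑ K : Finset (Fin D.M),
            ((-1 : ℂ) ^ K.card * (∏ s ∈ K, D.ζ ^ ((s : ℕ) + 1)) *
                ∏ s ∈ Kᶜ, D.q ^ (sg ε * D.Cs i j (s : ℕ))) •
              (gX D ε j (r' + (K.card : ℤ)) * gX D ε i (r + (D.M : ℤ) - (K.card : ℤ))))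
  | serre1 (ε : Bool) (i j : D.I0) (hij : D.Cij i j = -1) (hne : i ≠ j) (k m1 m2 : ℤ) :
      Rel (∑ t ∈ Finset.range D.M,
            D.pcoef (sg ε) i j t •
              (serreS D ε i j k (m1 + (D.pa i j t : ℤ)) (m2 + (D.pb i j t : ℤ)) +
               serreS D ε i j k (m2 + (D.pa i j t : ℤ)) (m1 + (D.pb i j t : ℤ))))
          0
  | serre2 (ε : Bool) (i : D.I0) (hii : D.Ciσ i = -1) (m : Fin 3 → ℤ) :
      Rel (∑ π : Equiv.Perm (Fin 3),
            ((D.sq ^ (3 : ℕ)) •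
                (gX D ε i (m (π 0) - sg ε) * gX D ε i (m (π 1)) * gX D ε i (m (π 2)))
              - (D.sq + D.sq⁻¹) •
                (gX D ε i (m (π 0)) * gX D ε i (m (π 1) - sg ε) * gX D ε i (m (π 2)))
              + (D.sq ^ (3 : ℕ))⁻¹ •
                (gX D ε i (m (π 0)) * gX D ε i (m (π 1)) * gX D ε i (m (π 2) - sg ε))))
          0
  | serre3 (ε : Bool) (i : D.I0) (hii : D.Ciσ i = -1) (m : Fin 3 → ℤ) :
      Rel (∑ π : Equiv.Perm (Fin 3),
            (((D.sq ^ (3 : ℕ))⁻¹) •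
                (gX D ε i (m (π 0) + sg ε) * gX D ε i (m (π 1)) * gX D ε i (m (π 2)))
              - (D.sq + D.sq⁻¹) •
                (gX D ε i (m (π 0)) * gX D ε i (m (π 1) + sg ε) * gX D ε i (m (π 2)))
              + (D.sq ^ (3 : ℕ)) •
                (gX D ε i (m (π 0)) * gX D ε i (m (π 1)) * gX D ε i (m (π 2) + sg ε))))
          0

/-- The shifted twisted quantum affine algebra `𝒰_q^{μ₊,μ₋}(ĝ^σ)`, presented by the
Drinfeld generators and relations. -/
abbrev U := RingQuot (Rel D μp μm)

/-- the canonical projection from the free algebra -/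
def mkU : FA D →ₐ[ℂ] U D μp μm := RingQuot.mkAlgHom ℂ (Rel D μp μm)

/-- the generator `x^+_{i,r}` of `𝒰_q^{μ₊,μ₋}(ĝ^σ)` -/
def xp (i : D.I0) (r : ℤ) : U D μp μm := mkU D μp μm (gXp D i r)
/-- the generator `x^-_{i,r}` -/
def xm (i : D.I0) (r : ℤ) : U D μp μm := mkU D μp μm (gXm D i r)
/-- the generator `φ^+_{i,r}` -/
def pp (i : D.I0) (r : ℤ) : U D μp μm := mkU D μp μm (gPp D i r)
/-- the generator `φ^-_{i,r}` -/
def pm (i : D.I0) (r : ℤ) : U D μp μm := mkU D μp μm (gPm D i r)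
/-- the generator `φ^+_{i,-α_i(μ₊)}⁻¹` -/
def ppInv (i : D.I0) : U D μp μm := mkU D μp μm (gPpInv D i)
/-- the generator `φ^-_{i,α_i(μ₋)}⁻¹` -/
def pmInv (i : D.I0) : U D μp μm := mkU D μp μm (gPmInv D i)
/-- the generator `h_{i,m}` -/
def hgen (i : D.I0) (m : ℤ) : U D μp μm := mkU D μp μm (gH D i m)

end TQA
namespace TQA

/-- The translation of modes by `ν` on the Drinfeld generators: `x^+_i` and `φ^±_i` move by `ν i`,
while `x^-_i` and `h_i` stay in place. -/
def shiftGen (D : TQAData) (ν : D.I0 → ℤ) : TQAGen D → TQAGen D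
  | TQAGen.xp i r => TQAGen.xp i (r + ν i)
  | TQAGen.xm i r => TQAGen.xm i r
  | TQAGen.pp i r => TQAGen.pp i (r + ν i)
  | TQAGen.pm i r => TQAGen.pm i (r + ν i)
  | TQAGen.ppInv i => TQAGen.ppInv i
  | TQAGen.pmInv i => TQAGen.pmInv i
  | TQAGen.hh i m => TQAGen.hh i m

/-- The endomorphism of the free algebra induced by `shiftGen`. -/
def shiftFA (D : TQAData) (ν : D.I0 → ℤ) : FA D →ₐ[ℂ] FA D :=
  FreeAlgebra.lift ℂ (fun a => FreeAlgebra.ι ℂ (shiftGen D ν a))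

/-- The amount by which the modes of `x^ε_i` are translated. -/
def xShift (D : TQAData) (ν : D.I0 → ℤ) (ε : Bool) (i : D.I0) : ℤ := if ε then ν i else 0

section
variable (D : TQAData) (ν : D.I0 → ℤ)

lemma shiftFA_ι (a : TQAGen D) :
    shiftFA D ν (FreeAlgebra.ι ℂ a) = FreeAlgebra.ι ℂ (shiftGen D ν a) := by
  simp [shiftFA]

lemma shiftFA_gXp (i : D.I0) (r : ℤ) : shiftFA D ν (gXp D i r) = gXp D i (r + ν i) :=
  shiftFA_ι D ν _
lemma shiftFA_gXm (i : D.I0) (r : ℤ) : shiftFA D ν (gXm D i r) = gXm D i r :=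
  shiftFA_ι D ν _
lemma shiftFA_gPp (i : D.I0) (r : ℤ) : shiftFA D ν (gPp D i r) = gPp D i (r + ν i) :=
  shiftFA_ι D ν _
lemma shiftFA_gPm (i : D.I0) (r : ℤ) : shiftFA D ν (gPm D i r) = gPm D i (r + ν i) :=
  shiftFA_ι D ν _
lemma shiftFA_gPpInv (i : D.I0) : shiftFA D ν (gPpInv D i) = gPpInv D i :=
  shiftFA_ι D ν _
lemma shiftFA_gPmInv (i : D.I0) : shiftFA D ν (gPmInv D i) = gPmInv D i :=
  shiftFA_ι D ν _
lemma shiftFA_gH (i : D.I0) (m : ℤ) : shiftFA D ν (gH D i m) = gH D i m :=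
  shiftFA_ι D ν _

lemma shiftFA_gX (ε : Bool) (i : D.I0) (r : ℤ) :
    shiftFA D ν (gX D ε i r) = gX D ε i (r + xShift D ν ε i) := by
  cases ε
  · simp [gX, xShift, shiftFA_gXm]
  · simp [gX, xShift, shiftFA_gXp]

lemma shiftFA_serreS (ε : Bool) (i j : D.I0) (k n1 n2 : ℤ) :
    shiftFA D ν (serreS D ε i j k n1 n2) =
      serreS D ε i j (k + xShift D ν ε j) (n1 + xShift D ν ε i) (n2 + xShift D ν ε i) := by
  simp only [serreS, map_add, map_sub, map_mul, map_smul, shiftFA_gX]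

lemma isCartanGen_shiftGen (a : TQAGen D) (ha : IsCartanGen D a) :
    IsCartanGen D (shiftGen D ν a) := by
  cases a <;> simp_all [IsCartanGen, shiftGen]

lemma dvd_xShift (hν : ∀ i, (D.N i : ℤ) ∣ ν i) (ε : Bool) (i : D.I0) :
    (D.N i : ℤ) ∣ xShift D ν ε i := by
  cases ε
  · simp [xShift]
  · simpa [xShift] using hν i

lemma shiftFA_neg_comp : (shiftFA D (-ν)).comp (shiftFA D ν) = AlgHom.id ℂ (FA D) := by
  apply FreeAlgebra.hom_ext
  funext a
  cases a <;> simp [shiftFA_ι, shiftGen]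

end

/-- Each defining relation for `(a, b)` is carried by the translation to the defining relation of
the same kind, at translated modes, for `(a - ν, b + ν)`. -/
lemma rel_shift (D : TQAData) (ν : D.I0 → ℤ) (hν : ∀ i, (D.N i : ℤ) ∣ ν i)
    {a b c d : D.I0 → ℤ} (hc : ∀ i, c i = a i - ν i) (hd : ∀ i, d i = b i + ν i)
    {x y : FA D} (h : Rel D a b x y) : Rel D c d (shiftFA D ν x) (shiftFA D ν y) := by
  have hlp : ∀ i, -a i + ν i = -c i := fun i => by rw [hc]; ring
  have hlm : ∀ i, b i + ν i = d i := fun i => (hd i).symm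
  cases h with
  | x_supp ε i r hr =>
    rw [shiftFA_gX, map_zero]
    exact Rel.x_supp ε i _ (by rwa [dvd_add_left (dvd_xShift D ν hν ε i)])
  | h_supp i m hm =>
    rw [shiftFA_gH, map_zero]
    exact Rel.h_supp i m hm
  | pp_supp i r hr =>
    rw [shiftFA_gPp, map_zero]
    exact Rel.pp_supp i _ (by rw [← hlp]; lia)
  | pm_supp i r hr =>
    rw [shiftFA_gPm, map_zero]
    exact Rel.pm_supp i _ (by rw [← hlm]; lia)
  | cartan_comm u v hu hv =>
    rw [map_mul, map_mul, shiftFA_ι, shiftFA_ι]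
    exact Rel.cartan_comm _ _ (isCartanGen_shiftGen D ν u hu) (isCartanGen_shiftGen D ν v hv)
  | pp_inv_l i =>
    rw [map_mul, map_one, shiftFA_gPpInv, shiftFA_gPp, hlp]
    exact Rel.pp_inv_l i
  | pp_inv_r i =>
    rw [map_mul, map_one, shiftFA_gPpInv, shiftFA_gPp, hlp]
    exact Rel.pp_inv_r i
  | pm_inv_l i =>
    rw [map_mul, map_one, shiftFA_gPmInv, shiftFA_gPm, hlm]
    exact Rel.pm_inv_l i
  | pm_inv_r i =>
    rw [map_mul, map_one, shiftFA_gPmInv, shiftFA_gPm, hlm]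
    exact Rel.pm_inv_r i
  | pp_exp i m =>
    simp only [map_smul, map_sum, map_mul, shiftFA_gPp, shiftFA_gH]
    have e1 : -a i + ((m : ℤ) + 1) + ν i = -c i + (m + 1) := by rw [← hlp]; ring
    have e2 : ∀ k : ℕ, -a i + ((m : ℤ) + 1) - ((k : ℤ) + 1) + ν i
        = -c i + (m + 1) - ((k : ℤ) + 1) := fun k => by rw [← hlp]; ring
    simp only [e1, e2]
    exact Rel.pp_exp i m
  | pm_exp i m =>
    simp only [map_smul, map_sum, map_mul, shiftFA_gPm, shiftFA_gH]
    have e1 : b i - ((m : ℤ) + 1) + ν i = d i - (m + 1) := by rw [← hlm]; ring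
    have e2 : ∀ k : ℕ, b i - ((m : ℤ) + 1) + ((k : ℤ) + 1) + ν i
        = d i - (m + 1) + ((k : ℤ) + 1) := fun k => by rw [← hlm]; ring
    simp only [e1, e2]
    exact Rel.pm_exp i m
  | lead_conj_p ε i j r =>
    simp only [map_smul, map_mul, shiftFA_gPp, shiftFA_gX, hlp]
    exact Rel.lead_conj_p ε i j _
  | lead_conj_m ε i j r =>
    simp only [map_smul, map_mul, shiftFA_gPm, shiftFA_gX, hlm]
    exact Rel.lead_conj_m ε i j _
  | h_x ε i j m r hm =>
    simp only [map_smul, map_mul, map_sub, shiftFA_gH, shiftFA_gX, add_assoc]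
    exact Rel.h_x ε i j m _ hm
  | xp_xm i j r r' =>
    have e : r + r' + ν i = r + ν i + r' := by ring
    simp only [apply_ite (shiftFA D ν), map_zero, map_smul, map_mul, map_sub, shiftFA_gXp,
      shiftFA_gXm, shiftFA_gPp, shiftFA_gPm, e]
    exact Rel.xp_xm i j _ r'
  | xx ε i j r r' =>
    have e1 : ∀ k : ℤ, r + (D.M : ℤ) - k + xShift D ν ε i
        = r + xShift D ν ε i + (D.M : ℤ) - k := fun k => by ring
    have e2 : ∀ k : ℤ, r' + k + xShift D ν ε j = r' + xShift D ν ε j + k := fun k => by ring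
    simp only [map_sum, map_smul, map_mul, shiftFA_gX, e1, e2]
    exact Rel.xx ε i j _ _
  | serre1 ε i j hij hne k m1 m2 =>
    simp only [map_sum, map_smul, map_add, map_zero, shiftFA_serreS,
      add_right_comm _ _ (xShift D ν ε i)]
    exact Rel.serre1 ε i j hij hne _ _ _
  | serre2 ε i hii m =>
    have e : ∀ k : ℤ, k - sg ε + xShift D ν ε i = k + xShift D ν ε i - sg ε :=
      fun k => by ring
    simp only [map_sum, map_smul, map_add, map_sub, map_mul, map_zero, shiftFA_gX, e]
    exact Rel.serre2 ε i hii (fun t => m t + xShift D ν ε i)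
  | serre3 ε i hii m =>
    have e : ∀ k : ℤ, k + sg ε + xShift D ν ε i = k + xShift D ν ε i + sg ε :=
      fun k => by ring
    simp only [map_sum, map_smul, map_add, map_sub, map_mul, map_zero, shiftFA_gX, e]
    exact Rel.serre3 ε i hii (fun t => m t + xShift D ν ε i)

/-- The homomorphism `𝒰_q^{a,b} → 𝒰_q^{a-ν,b+ν}` translating the modes. The target shifts `c`, `d`
are only tied to `a - ν`, `b + ν` by equations, so that the translation by `-ν` goes back to
`𝒰_q^{a,b}` itself. -/
def shiftHom (D : TQAData) (ν : D.I0 → ℤ) (hν : ∀ i, (D.N i : ℤ) ∣ ν i)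
    {a b c d : D.I0 → ℤ} (hc : ∀ i, c i = a i - ν i) (hd : ∀ i, d i = b i + ν i) :
    U D a b →ₐ[ℂ] U D c d :=
  RingQuot.liftAlgHom ℂ ⟨(RingQuot.mkAlgHom ℂ (Rel D c d)).comp (shiftFA D ν),
    fun _ _ h => RingQuot.mkAlgHom_rel ℂ (rel_shift D ν hν hc hd h)⟩

lemma shiftHom_mk (D : TQAData) (ν : D.I0 → ℤ) (hν : ∀ i, (D.N i : ℤ) ∣ ν i)
    {a b c d : D.I0 → ℤ} (hc : ∀ i, c i = a i - ν i) (hd : ∀ i, d i = b i + ν i) (x : FA D) :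
    shiftHom D ν hν hc hd (RingQuot.mkAlgHom ℂ (Rel D a b) x) =
      RingQuot.mkAlgHom ℂ (Rel D c d) (shiftFA D ν x) :=
  RingQuot.liftAlgHom_mkAlgHom_apply ℂ _ _ x

lemma shiftHom_comp (D : TQAData) (ν ν' : D.I0 → ℤ) (hν : ∀ i, (D.N i : ℤ) ∣ ν i)
    (hν' : ∀ i, (D.N i : ℤ) ∣ ν' i) (hneg : ν' = -ν)
    {a b c d : D.I0 → ℤ} (hc : ∀ i, c i = a i - ν i) (hd : ∀ i, d i = b i + ν i)
    (ha : ∀ i, a i = c i - ν' i) (hb : ∀ i, b i = d i + ν' i) :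
    (shiftHom D ν' hν' ha hb).comp (shiftHom D ν hν hc hd) = AlgHom.id ℂ (U D a b) := by
  subst hneg
  apply RingQuot.ringQuot_ext'
  apply FreeAlgebra.hom_ext
  funext x
  have h := AlgHom.congr_fun (shiftFA_neg_comp D ν) (FreeAlgebra.ι ℂ x)
  simp only [AlgHom.comp_apply, AlgHom.id_apply] at h
  simp only [Function.comp_apply, AlgHom.comp_apply, AlgHom.id_apply]
  rw [shiftHom_mk, shiftHom_mk, h]

/-- The isomorphism `𝒰_q^{a,b} ≅ 𝒰_q^{a-ν,b+ν}` translating the modes by `ν`. -/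
def shiftEquiv (D : TQAData) (ν : D.I0 → ℤ) (hν : ∀ i, (D.N i : ℤ) ∣ ν i)
    {a b c d : D.I0 → ℤ} (hc : ∀ i, c i = a i - ν i) (hd : ∀ i, d i = b i + ν i) :
    U D a b ≃ₐ[ℂ] U D c d :=
  have hν' : ∀ i, (D.N i : ℤ) ∣ (-ν) i := fun i => by simpa using hν i
  have ha : ∀ i, a i = c i - (-ν) i := fun i => by simp [hc]
  have hb : ∀ i, b i = d i + (-ν) i := fun i => by simp [hd]
  AlgEquiv.ofAlgHom (shiftHom D ν hν hc hd) (shiftHom D (-ν) hν' ha hb)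
    (shiftHom_comp D (-ν) ν hν' hν (neg_neg ν).symm ha hb hc hd)
    (shiftHom_comp D ν (-ν) hν hν' rfl hc hd ha hb)

/-- **Shifted twisted quantum affine algebras depend only on the total shift.**
For any coweights `μ₊, μ₋ ∈ Λ`, the shifted twisted quantum affine algebra
`𝒰_q^{μ₊,μ₋}(ĝ^σ)` depends, up to isomorphism, only on the sum `μ = μ₊ + μ₋`:
there is an algebra isomorphism `𝒰_q^{μ₊,μ₋}(ĝ^σ) ≅ 𝒰_q^{0,μ₊+μ₋}(ĝ^σ)`. -/
theorem iso_depends_only_on_total_shift (D : TQAData) (μp μm : D.I0 → ℤ)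
    (hμp : ∀ i, D.fixed i → (D.M : ℤ) ∣ μp i) (hμm : ∀ i, D.fixed i → (D.M : ℤ) ∣ μm i) :
    Nonempty (U D μp μm ≃ₐ[ℂ] U D 0 (μp + μm)) := by
  have hν : ∀ i, (D.N i : ℤ) ∣ μp i := by
    intro i
    unfold TQAData.N
    split_ifs with h
    · exact hμp i h
    · simp
  exact ⟨shiftEquiv D μp hν (by intro i; simp) (by intro i; simp [add_comm])⟩

end TQA
end
end

section
/- Let ĝ^σ be a twisted affine type other than A₂ₙ⁽²⁾, let μ∈Λ, μ′∈−Λ⁺ and a∈ℂ*. For i∈I₀ set ι_i = 1+(M−1)δ_{σ(i)=i} and n_i(μ′) = −α_i(μ′)/ι_i. Then the assignment x_i^+(z) ↦ x_i^+(z), x_i^−(z) ↦ (1−(az^{−1})^{ι_i})^{n_i(μ′)} x_i^−(z), φ_i^±(z) ↦ (1−(az)^{ι_i})^{n_i(μ′)} φ_i^±(z), on Drinfeld currents defines an algebra homomorphism ι_{μ,μ′,a} : U_q^μ(ĝ^σ) → U_q^{μ+μ′}(ĝ^σ) (the shift homomorphism). -/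
/-!
In modes, multiplication of a current by `1 - b z^d` replaces `F_r` by `F_r - b F_{r-d}`, and the
shift homomorphism iterates this `n_i(μ')` times (`shiftT`; `shiftT_eq_sum` is the binomial
expansion). The assignment is checked on the defining relations, one factor at a time.

* The relations among the `x_i^±`, and those between `x_i^±` and the Cartan generators, hold for
  all modes and are multilinear in the currents and translation invariant, hence stable under
  such a step (`quad_shiftT`, `serre_shiftT`). The Serre relations are quadratic in `x_i^±`;
  there stability relies on the symmetrization. The relation for `[x_i^+, x_i^-]` is stable
  because `x_i^-` and `φ_i^±` are shifted by the same factor.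
* The generators `h_{i,m}` are forced to go to `h_{i,m}` plus the scalar coming from
  `log (1 - (az)^{ι_i})^{n_i}`. The exponential formula for the Cartan currents says that their
  logarithmic derivative is a generating series of the `h_{i,m}`, and the shift changes this
  logarithmic derivative by a geometric series (`logDer_shiftT`).
* For `φ_i^-` the expansion is at `z = ∞`, where
  `(1 - (az)^ι)^n = (-a^ι)^n z^{ιn} (1 - (az)^{-ι})^n` (`shiftT_reflect`). This moves the leading
  mode from `α_i(μ+μ')` to `α_i(μ)` and multiplies it by a nonzero scalar, so it stays invertible.

The last two Serre relations occur only if `C_{i,σ(i)} = -1`, which is excluded.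
-/

noncomputable section

open scoped TensorProduct

namespace TQA

variable (D : TQAData)

/-- `ι_i = 1 + (M-1)δ_{σ(i)=i}` (equal to `N_i`) -/
def iot (i : D.I0) : ℕ := D.N i

/-- `n_i(μ') = -α_i(μ')/ι_i` for an antidominant coweight `μ'` -/
def nshift (μ' : D.I0 → ℤ) (i : D.I0) : ℕ := ((-μ' i) / (iot D i : ℤ)).toNat

/-! ### Iterated one-factor shifts -/

section Shift

variable {A : Type*} [Ring A] [Algebra ℂ A]

/-- Modes of the current `(1 - b z^d)^n F(z)`, where `F(z) = ∑_r F_r z^r`: multiplication by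
`1 - b z^d` replaces `F_r` by `F_r - b F_{r-d}`, and this step is iterated `n` times. -/
def shiftT (b : ℂ) (d : ℕ) : ℕ → (ℤ → A) → ℤ → A
  | 0, F => F
  | n + 1, F => fun r => shiftT b d n F r - b • shiftT b d n F (r - d)

lemma shiftT_succ (b : ℂ) (d n : ℕ) (F : ℤ → A) (r : ℤ) :
    shiftT b d (n + 1) F r = shiftT b d n F r - b • shiftT b d n F (r - d) := rfl

/-- Every property of a current preserved by multiplication by `1 - b z^d` passes to
`(1 - b z^d)^n F(z)`. -/
lemma shiftT_ind (b : ℂ) (d : ℕ) (P : (ℤ → A) → Prop)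
    (step : ∀ F, P F → P (fun r => F r - b • F (r - d))) (n : ℕ) (F : ℤ → A) (h : P F) :
    P (shiftT b d n F) := by
  induction n with
  | zero => exact h
  | succ n ih => exact step _ ih

/-- Binomial expansion of the iterated shift. -/
lemma shiftT_eq_sum (a : ℂ) (d n : ℕ) (F : ℤ → A) (r : ℤ) :
    shiftT (a ^ d) d n F r = ∑ k ∈ Finset.range (n + 1),
      ((n.choose k : ℂ) * (-1) ^ k * a ^ (d * k)) • F (r - (d * k : ℕ)) := by
  induction n generalizing r with
  | zero => simp [shiftT]
  | succ n ih =>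
    rw [shiftT_succ, ih, ih, Finset.sum_range_succ' _ (n + 1)]
    -- The top summand of the first sum may be added for free, since `choose n (n+1) = 0`.
    have h1 : ∑ k ∈ Finset.range (n + 1),
        ((n.choose k : ℂ) * (-1) ^ k * a ^ (d * k)) • F (r - (d * k : ℕ))
        = ∑ k ∈ Finset.range (n + 1),
          ((n.choose (k + 1) : ℂ) * (-1) ^ (k + 1) * a ^ (d * (k + 1))) •
            F (r - (d * (k + 1) : ℕ)) + F r := by
      have h2 := Finset.sum_range_succ (fun k =>
        ((n.choose k : ℂ) * (-1) ^ k * a ^ (d * k)) • F (r - (d * k : ℕ))) (n + 1)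
      rw [Finset.sum_range_succ'] at h2
      simpa using h2.symm
    rw [h1, Finset.smul_sum, add_sub_right_comm, ← Finset.sum_sub_distrib]
    congr 1
    · refine Finset.sum_congr rfl fun k _ => ?_
      have e : r - (d : ℤ) - (d * k : ℕ) = r - (d * (k + 1) : ℕ) := by push_cast; ring
      rw [e, smul_smul, ← sub_smul, Nat.choose_succ_succ]
      congr 1
      push_cast
      ring
    · simp

/-- Closure of a subalgebra under the mode shifts. -/
lemma shiftT_mem (S : Subalgebra ℂ A) (b : ℂ) (d n : ℕ) (F : ℤ → A) (h : ∀ r, F r ∈ S)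
    (r : ℤ) : shiftT b d n F r ∈ S :=
  shiftT_ind b d (fun F => ∀ r, F r ∈ S)
    (fun _ hF _ => S.sub_mem (hF _) (S.smul_mem (hF _) _)) n F h r

lemma shiftT_supp_low (b : ℂ) (d n : ℕ) (F : ℤ → A) (h : ∀ r < 0, F r = 0)
    (r : ℤ) (hr : r < 0) : shiftT b d n F r = 0 :=
  shiftT_ind b d (fun F => ∀ r < 0, F r = 0)
    (fun F hF r hr => by simp [hF r hr, hF (r - d) (by omega)]) n F h r hr

lemma shiftT_lead_low (b : ℂ) (d n : ℕ) (hd : 0 < d) (F : ℤ → A) (h : ∀ r < 0, F r = 0) :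
    shiftT b d n F 0 = F 0 := by
  induction n with
  | zero => rfl
  | succ n ih =>
    rw [shiftT_succ, ih, shiftT_supp_low b d n F h _ (by omega), smul_zero, sub_zero]

/-- The identity `(1 - b z^d)^n = (-b)^n z^{dn} (1 - b⁻¹ z^{-d})^n` on modes: in the variable
`z⁻¹`, the shift by `b` becomes the shift by `b⁻¹` up to a nonzero scalar. -/
lemma shiftT_reflect (b : ℂ) (hb : b ≠ 0) (d n : ℕ) (F : ℤ → A) (s r : ℤ) :
    shiftT b d n F (s + d * n - r) =
      (-b) ^ n • shiftT b⁻¹ d n (fun r => F (s - r)) r := by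
  induction n generalizing r with
  | zero => simp [shiftT]
  | succ n ih =>
    have h1 := ih r
    have h2 := ih (r - d)
    have e1 : s + d * ((n + 1 : ℕ) : ℤ) - r = s + d * n - (r - d) := by push_cast; ring
    have e2 : s + d * n - (r - d) - d = s + d * n - r := by ring
    rw [shiftT_succ, e1, e2, h1, h2, shiftT_succ, smul_sub, smul_smul, smul_smul, pow_succ,
      show (-b) ^ n * -b * b⁻¹ = -((-b) ^ n) by field_simp, neg_smul, sub_neg_eq_add,
      show (-b) ^ n * -b = -(b * (-b) ^ n) by ring, neg_smul]
    abel

/-! ### Logarithmic derivatives -/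

/-- `z Q'(z) = (∑_{k≥1} G_{k-1} z^k) Q(z)` for a current `Q(z)` supported in nonnegative
degrees. The mode sums are truncated at any `K` bounding the degree, which costs nothing
since the omitted modes of `Q` vanish. -/
def LogDer (G : ℕ → A) (Q : ℤ → A) : Prop :=
  ∀ (K : ℕ) (r : ℤ), r ≤ K → (r : ℂ) • Q r = ∑ k ∈ Finset.range K, G k * Q (r - (k + 1))

lemma logDer_of_rec (G : ℕ → A) (Q : ℤ → A) (h0 : ∀ r < 0, Q r = 0)
    (h : ∀ m : ℕ, ((m : ℂ) + 1) • Q (m + 1) =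
      ∑ k ∈ Finset.range (m + 1), G k * Q (m + 1 - (k + 1))) : LogDer G Q := by
  intro K r hr
  rcases le_or_gt r 0 with h1 | h1
  · have : (r : ℂ) • Q r = 0 := by
      rcases h1.lt_or_eq with h2 | h2
      · simp [h0 r h2]
      · simp [h2]
    rw [this, Finset.sum_eq_zero]
    intro k _
    rw [h0 _ (by omega), mul_zero]
  · obtain ⟨m, rfl⟩ : ∃ m : ℕ, r = m + 1 := ⟨(r - 1).toNat, by omega⟩
    have := h m
    push_cast
    rw [this]
    refine Finset.sum_subset (Finset.range_mono (by omega)) fun k _ hk => ?_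
    rw [Finset.mem_range, not_lt] at hk
    rw [h0 _ (by omega), mul_zero]

/-- Telescoping form of `∑_{d ∣ k, k ≥ 1} (az)^k · (1 - (az)^d) Q(z) = (az)^d Q(z)`. -/
lemma geom_telescope (a : ℂ) (d : ℕ) (hd : 0 < d) (Q : ℤ → A) (h0 : ∀ r < 0, Q r = 0)
    (K : ℕ) (r : ℤ) (hr : r ≤ K) :
    ∑ k ∈ Finset.range K, (if d ∣ k + 1 then a ^ (k + 1) else 0) •
      (Q (r - (k + 1)) - a ^ d • Q (r - (k + 1) - d)) = a ^ d • Q (r - d) := by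
  set u : ℕ → A := fun k => (if d ∣ k + 1 then a ^ (k + 1) else 0) • Q (r - (k + 1)) with hu
  have h1 : ∀ k : ℕ, (if d ∣ k + 1 then a ^ (k + 1) else 0) •
      (Q (r - (k + 1)) - a ^ d • Q (r - (k + 1) - d)) = u k - u (d + k) := by
    intro k
    have e : d ∣ d + k + 1 ↔ d ∣ k + 1 := by
      rw [add_assoc]; exact Nat.dvd_add_right (dvd_refl d)
    have e2 : r - (((d + k : ℕ) : ℤ) + 1) = r - (k + 1) - d := by push_cast; ring
    simp only [hu, e, e2, smul_sub, smul_smul]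
    split_ifs
    · congr 2; ring
    · simp
  rw [Finset.sum_congr rfl fun k _ => h1 k, Finset.sum_sub_distrib, sub_eq_iff_eq_add]
  have h2 := Finset.sum_range_add u d K
  rw [add_comm d K, Finset.sum_range_add u K d] at h2
  have h3 : ∑ k ∈ Finset.range d, u (K + k) = 0 := by
    refine Finset.sum_eq_zero fun k _ => ?_
    simp only [hu]
    rw [h0 _ (by push_cast; omega), smul_zero]
  -- Among `1, …, d` only `d` itself is divisible by `d`.
  have h4 : ∑ k ∈ Finset.range d, u k = a ^ d • Q (r - d) := by
    rw [Finset.sum_eq_single (d - 1)]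
    · simp only [hu]
      rw [show d - 1 + 1 = d by omega, if_pos (dvd_refl d)]
      congr 2
      omega
    · intro k hk hk'
      rw [Finset.mem_range] at hk
      simp only [hu]
      rw [if_neg, zero_smul]
      intro hdv
      have := Nat.le_of_dvd (by omega) hdv
      omega
    · intro h
      rw [Finset.mem_range] at h
      omega
  rw [h3, add_zero, h4] at h2
  exact h2

/-- Multiplying a current by `(1 - (az)^d)^n` changes its logarithmic derivative by
`-n d ∑_{d ∣ k, k ≥ 1} (az)^k`. -/
lemma logDer_shiftT (a : ℂ) (d n : ℕ) (hd : 0 < d) (G : ℕ → A) (Q : ℤ → A)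
    (h0 : ∀ r < 0, Q r = 0) (h : LogDer G Q) :
    LogDer (fun k => G k - algebraMap ℂ A
      ((n : ℂ) * d * (if d ∣ k + 1 then a ^ (k + 1) else 0))) (shiftT (a ^ d) d n Q) := by
  induction n with
  | zero => simpa [shiftT] using h
  | succ n ih =>
    have h0' := shiftT_supp_low (a ^ d) d n Q h0
    intro K r hr
    have h1 := ih K r hr
    have h2 := ih K (r - d) (by omega)
    have h3 := geom_telescope a d hd _ h0' K r hr
    simp only [shiftT_succ]
    generalize shiftT (a ^ d) d n Q = F at *
    have key : ∀ k : ℕ, (G k - algebraMap ℂ A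
        (((n + 1 : ℕ) : ℂ) * d * (if d ∣ k + 1 then a ^ (k + 1) else 0))) *
          (F (r - (k + 1)) - a ^ d • F (r - (k + 1) - d)) =
        (G k - algebraMap ℂ A ((n : ℂ) * d * (if d ∣ k + 1 then a ^ (k + 1) else 0))) *
          F (r - (k + 1))
        - a ^ d • ((G k - algebraMap ℂ A
            ((n : ℂ) * d * (if d ∣ k + 1 then a ^ (k + 1) else 0))) * F (r - d - (k + 1)))
        - (d : ℂ) • ((if d ∣ k + 1 then a ^ (k + 1) else 0) •
          (F (r - (k + 1)) - a ^ d • F (r - (k + 1) - d))) := by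
      intro k
      have e : r - d - ((k : ℤ) + 1) = r - (k + 1) - d := by ring
      rw [e]
      generalize (if d ∣ k + 1 then a ^ (k + 1) else 0 : ℂ) = c
      simp only [Algebra.algebraMap_eq_smul_one, sub_mul, mul_sub, smul_mul_assoc, one_mul,
        mul_smul_comm, Nat.cast_add, Nat.cast_one]
      module
    rw [Finset.sum_congr rfl fun k _ => key k, Finset.sum_sub_distrib, Finset.sum_sub_distrib,
      ← Finset.smul_sum, ← Finset.smul_sum, ← h1, ← h2, h3]
    push_cast
    module

/-! ### Stability of the quadratic and Serre relations -/

lemma commutator_step (b : ℂ) (x y z : A) :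
    x * (y - b • z) - (y - b • z) * x = (x * y - y * x) - b • (x * z - z * x) := by
  simp only [mul_sub, sub_mul, mul_smul_comm, smul_mul_assoc]
  module

/-- A quadratic relation holding for all modes is bilinear in the two currents and translation
invariant, hence stable under shifting both of them. -/
lemma quad_shiftT {κ : Type*} [Fintype κ] (α β : κ → ℂ) (c : κ → ℤ) (M : ℤ)
    (b b' : ℂ) (d d' n n' : ℕ) (F G : ℤ → A)
    (h : ∀ r r', ∑ K, α K • (F (r + M - c K) * G (r' + c K)) =
      ∑ K, β K • (G (r' + c K) * F (r + M - c K))) (r r' : ℤ) :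
    ∑ K, α K • (shiftT b d n F (r + M - c K) * shiftT b' d' n' G (r' + c K)) =
      ∑ K, β K • (shiftT b' d' n' G (r' + c K) * shiftT b d n F (r + M - c K)) := by
  have hF := shiftT_ind b d (fun F => ∀ r r', ∑ K, α K • (F (r + M - c K) * G (r' + c K)) =
      ∑ K, β K • (G (r' + c K) * F (r + M - c K))) (by
    intro F h r r'
    have h2 := h (r - d) r'
    have e : ∀ K, r - d + M - c K = r + M - c K - d := fun K => by ring
    simp only [e] at h2
    simp only [sub_mul, mul_sub, smul_sub, Finset.sum_sub_distrib, smul_mul_assoc,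
      mul_smul_comm, smul_comm _ b, ← Finset.smul_sum]
    rw [h r r', h2]) n F h
  generalize shiftT b d n F = F at hF
  refine shiftT_ind b' d' (fun G => ∀ r r', ∑ K, α K • (F (r + M - c K) * G (r' + c K)) =
      ∑ K, β K • (G (r' + c K) * F (r + M - c K))) ?_ n' G hF r r'
  intro G h r r'
  have h1 := h r r'
  have h2 := h r (r' - d')
  have e : ∀ K, r' - d' + c K = r' + c K - d' := fun K => by ring
  simp only [e] at h2
  simp only [sub_mul, mul_sub, smul_sub, Finset.sum_sub_distrib, smul_mul_assoc,
    mul_smul_comm, smul_comm _ b', ← Finset.smul_sum]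
  rw [h1, h2]

/-- The Serre expression `G_k F_{n₁} F_{n₂} - c F_{n₁} G_k F_{n₂} + F_{n₁} F_{n₂} G_k`. -/
def serreE (c : ℂ) (F G : ℤ → A) (k n1 n2 : ℤ) : A :=
  G k * F n1 * F n2 - c • (F n1 * G k * F n2) + F n1 * F n2 * G k

lemma serreE_left (c b : ℂ) (d : ℕ) (F G : ℤ → A) (k n1 n2 : ℤ) :
    serreE c (fun r => F r - b • F (r - d)) G k n1 n2 =
      serreE c F G k n1 n2 - b • serreE c F G k (n1 - d) n2 - b • serreE c F G k n1 (n2 - d)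
        + (b * b) • serreE c F G k (n1 - d) (n2 - d) := by
  simp only [serreE, sub_mul, mul_sub, smul_mul_assoc, mul_smul_comm, smul_sub]
  module

lemma serreE_right (c b : ℂ) (d : ℕ) (F G : ℤ → A) (k n1 n2 : ℤ) :
    serreE c F (fun r => G r - b • G (r - d)) k n1 n2 =
      serreE c F G k n1 n2 - b • serreE c F G (k - d) n1 n2 := by
  simp only [serreE, sub_mul, mul_sub, smul_mul_assoc, mul_smul_comm]
  module

/-- Stability of the Serre relations. The symmetrization in `m₁, m₂` matters: shifting `F` adds
the relations at `(m₁ - d, m₂)` and `(m₁, m₂ - d)` with equal coefficients. -/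
lemma serre_shiftT (c : ℂ) (s : Finset ℕ) (p : ℕ → ℂ) (u v : ℕ → ℤ)
    (b b' : ℂ) (d d' n n' : ℕ) (F G : ℤ → A)
    (h : ∀ k m1 m2, ∑ t ∈ s, p t • (serreE c F G k (m1 + u t) (m2 + v t) +
      serreE c F G k (m2 + u t) (m1 + v t)) = 0) (k m1 m2 : ℤ) :
    ∑ t ∈ s, p t • (
      serreE c (shiftT b d n F) (shiftT b' d' n' G) k (m1 + u t) (m2 + v t) +
      serreE c (shiftT b d n F) (shiftT b' d' n' G) k (m2 + u t) (m1 + v t)) = 0 := by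
  have hF := shiftT_ind b d (fun F => ∀ k m1 m2, ∑ t ∈ s, p t • (
      serreE c F G k (m1 + u t) (m2 + v t) + serreE c F G k (m2 + u t) (m1 + v t)) = 0) (by
    intro F h k m1 m2
    have h1 := h k m1 m2
    have h2 := h k (m1 - d) m2
    have h3 := h k m1 (m2 - d)
    have h4 := h k (m1 - d) (m2 - d)
    have e : ∀ m x : ℤ, m - d + x = m + x - d := fun m x => by ring
    simp only [e] at h2 h3 h4
    simp only [serreE_left]
    rw [← sub_zero (0 : A)]
    nth_rewrite 1 [← h1]
    rw [← smul_zero b, ← add_zero (0 : A)]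
    nth_rewrite 1 [← h2]
    rw [← h3, ← sub_zero (b • _), ← smul_zero (b * b), ← h4]
    simp only [Finset.smul_sum, ← Finset.sum_sub_distrib, ← Finset.sum_add_distrib]
    refine Finset.sum_congr rfl fun t _ => ?_
    module) n F h
  generalize shiftT b d n F = F at hF
  refine shiftT_ind b' d' (fun G => ∀ k m1 m2, ∑ t ∈ s, p t • (
      serreE c F G k (m1 + u t) (m2 + v t) + serreE c F G k (m2 + u t) (m1 + v t)) = 0)
      ?_ n' G hF k m1 m2
  intro G h k m1 m2
  have h1 := h k m1 m2
  have h2 := h (k - d') m1 m2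
  simp only [serreE_right]
  rw [← sub_zero (0 : A)]
  nth_rewrite 1 [← h1]
  rw [← smul_zero b', ← h2]
  simp only [Finset.smul_sum, ← Finset.sum_sub_distrib]
  refine Finset.sum_congr rfl fun t _ => ?_
  module

end Shift

/-! ### The homomorphism on generators -/

lemma mkU_rel (μp μm : D.I0 → ℤ) {x y : FA D} (h : Rel D μp μm x y) :
    mkU D μp μm x = mkU D μp μm y :=
  RingQuot.mkAlgHom_rel ℂ h

lemma N_pos (i : D.I0) : 0 < D.N i := by
  unfold TQAData.N
  split_ifs
  · exact D.Mpos
  · exact Nat.one_pos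

lemma qd_ne_zero (i : D.I0) : D.qd i ≠ 0 := by
  intro h
  apply D.hqi1 i
  have h0 := D.hqi0 i
  rw [TQAData.qd, sub_eq_zero] at h
  nth_rewrite 2 [h]
  exact mul_inv_cancel₀ h0

/-- Integrality of `n_i(μ')`: since `μ' ∈ -Λ⁺`, one has `ι_i n_i(μ') = -α_i(μ')`. -/
lemma N_mul_nshift (μ' : D.I0 → ℤ) (hΛμ' : ∀ i, D.fixed i → (D.M : ℤ) ∣ μ' i)
    (hμ' : ∀ i, μ' i ≤ 0) (i : D.I0) : (D.N i : ℤ) * (nshift D μ' i : ℤ) = -μ' i := by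
  have hdvd : (D.N i : ℤ) ∣ -μ' i := by
    rw [dvd_neg]
    unfold TQAData.N
    split_ifs with h
    · exact hΛμ' i h
    · simp
  have hnn : 0 ≤ -μ' i / (D.N i : ℤ) := Int.ediv_nonneg (by have := hμ' i; omega) (by omega)
  rw [nshift, iot, Int.toNat_of_nonneg hnn, Int.mul_ediv_cancel' hdvd]

/-- The scalar by which `h_{i,m}` is translated: `log (1 - (az)^{ι_i})^{n_i}` contributes
`-n_i ι_i a^m / m` in each degree `m` divisible by `ι_i`, for positive as well as for negative
`m`. At `m = 0` the division by zero gives the desired value `0`. -/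
def hTrans (μ' : D.I0 → ℤ) (a : ℂ) (i : D.I0) (m : ℤ) : ℂ :=
  if (D.N i : ℤ) ∣ m then (nshift D μ' i : ℂ) * D.N i * a ^ m / (m * D.qd i) else 0

/-- Images of the Drinfeld generators under the shift homomorphism. -/
def img (μ μ' : D.I0 → ℤ) (a : ℂ) : TQAGen D → U D 0 (μ + μ')
  | TQAGen.xp i r => xp D 0 (μ + μ') i r
  | TQAGen.xm i r => shiftT (a ^ D.N i) (D.N i) (nshift D μ' i) (xm D 0 (μ + μ') i) r
  | TQAGen.pp i r => shiftT (a ^ D.N i) (D.N i) (nshift D μ' i) (pp D 0 (μ + μ') i) r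
  | TQAGen.pm i r => shiftT (a ^ D.N i) (D.N i) (nshift D μ' i) (pm D 0 (μ + μ') i) r
  | TQAGen.pmInv i => ((-(a ^ D.N i)) ^ nshift D μ' i)⁻¹ • pmInv D 0 (μ + μ') i
  | TQAGen.hh i m => hgen D 0 (μ + μ') i m - algebraMap ℂ _ (hTrans D μ' a i m)
  | TQAGen.ppInv i => ppInv D 0 (μ + μ') (i : D.I0)

/-- The generator `x^ε_{i,r}` of the quotient. -/
def xx (μp μm : D.I0 → ℤ) (ε : Bool) (i : D.I0) (r : ℤ) : U D μp μm := mkU D μp μm (gX D ε i r)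

/-- The exponent of `1 - (az^{-1})^{ι_i}` in the image of `x_i^ε`: zero for `ε = +`, which
allows both signs to be treated uniformly. -/
def expo (μ' : D.I0 → ℤ) : Bool → D.I0 → ℕ
  | false, i => nshift D μ' i
  | true, _ => 0

/-- The shift homomorphism on the free algebra. -/
def imgHom (μ μ' : D.I0 → ℤ) (a : ℂ) : FA D →ₐ[ℂ] U D 0 (μ + μ') :=
  FreeAlgebra.lift ℂ (img D μ μ' a)

section Images

variable (μ μ' : D.I0 → ℤ) (a : ℂ)

lemma imgHom_ι (g : TQAGen D) : imgHom D μ μ' a (FreeAlgebra.ι ℂ g) = img D μ μ' a g := by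
  simp [imgHom]

lemma imgHom_X (ε : Bool) (i : D.I0) (r : ℤ) : imgHom D μ μ' a (gX D ε i r) =
    shiftT (a ^ D.N i) (D.N i) (expo D μ' ε i) (xx D 0 (μ + μ') ε i) r := by
  cases ε
  · exact imgHom_ι D μ μ' a _
  · exact imgHom_ι D μ μ' a _

lemma imgHom_Xp (i : D.I0) (r : ℤ) :
    imgHom D μ μ' a (gXp D i r) = xp D 0 (μ + μ') i r := imgHom_ι D μ μ' a _

lemma imgHom_Xm (i : D.I0) (r : ℤ) : imgHom D μ μ' a (gXm D i r) =
    shiftT (a ^ D.N i) (D.N i) (nshift D μ' i) (xm D 0 (μ + μ') i) r := imgHom_ι D μ μ' a _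

lemma imgHom_Pp (i : D.I0) (r : ℤ) : imgHom D μ μ' a (gPp D i r) =
    shiftT (a ^ D.N i) (D.N i) (nshift D μ' i) (pp D 0 (μ + μ') i) r := imgHom_ι D μ μ' a _

lemma imgHom_Pm (i : D.I0) (r : ℤ) : imgHom D μ μ' a (gPm D i r) =
    shiftT (a ^ D.N i) (D.N i) (nshift D μ' i) (pm D 0 (μ + μ') i) r := imgHom_ι D μ μ' a _

lemma imgHom_PpInv (i : D.I0) :
    imgHom D μ μ' a (gPpInv D i) = ppInv D 0 (μ + μ') i := imgHom_ι D μ μ' a _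

lemma imgHom_PmInv (i : D.I0) : imgHom D μ μ' a (gPmInv D i) =
    ((-(a ^ D.N i)) ^ nshift D μ' i)⁻¹ • pmInv D 0 (μ + μ') i := imgHom_ι D μ μ' a _

lemma imgHom_H (i : D.I0) (m : ℤ) : imgHom D μ μ' a (gH D i m) =
    hgen D 0 (μ + μ') i m - algebraMap ℂ _ (hTrans D μ' a i m) :=
  imgHom_ι D μ μ' a (TQAGen.hh i m)

/-! ### Cartan currents -/

lemma pp_low (μm : D.I0 → ℤ) (i : D.I0) (r : ℤ) (hr : r < 0) : pp D 0 μm i r = 0 := by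
  simpa [pp] using mkU_rel D 0 μm (Rel.pp_supp i r (by simpa using hr))

lemma pm_low (μm : D.I0 → ℤ) (i : D.I0) (r : ℤ) (hr : r < 0) : pm D 0 μm i (μm i - r) = 0 := by
  simpa [pm] using mkU_rel D 0 μm (Rel.pm_supp i (μm i - r) (by omega))

lemma imgHom_Pp_lead (i : D.I0) : imgHom D μ μ' a (gPp D i 0) = pp D 0 (μ + μ') i 0 := by
  rw [imgHom_Pp]
  exact shiftT_lead_low _ _ _ (N_pos D i) _ (pp_low D _ i)

/-- The image of `φ_i^-`, expanded downwards from its leading mode `α_i(μ)`. -/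
lemma imgHom_Pm_reflect (hΛμ' : ∀ i, D.fixed i → (D.M : ℤ) ∣ μ' i) (hμ' : ∀ i, μ' i ≤ 0)
    (ha : a ≠ 0) (i : D.I0) (r : ℤ) : imgHom D μ μ' a (gPm D i (μ i - r)) =
    (-(a ^ D.N i)) ^ nshift D μ' i • shiftT (a⁻¹ ^ D.N i) (D.N i) (nshift D μ' i)
      (fun r => pm D 0 (μ + μ') i ((μ + μ') i - r)) r := by
  rw [imgHom_Pm, inv_pow, ← shiftT_reflect _ (pow_ne_zero _ ha),
    N_mul_nshift D μ' hΛμ' hμ' i]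
  congr 1
  simp

lemma imgHom_Pm_lead (hΛμ' : ∀ i, D.fixed i → (D.M : ℤ) ∣ μ' i) (hμ' : ∀ i, μ' i ≤ 0)
    (ha : a ≠ 0) (i : D.I0) : imgHom D μ μ' a (gPm D i (μ i)) =
    (-(a ^ D.N i)) ^ nshift D μ' i • pm D 0 (μ + μ') i ((μ + μ') i) := by
  have h := imgHom_Pm_reflect D μ μ' a hΛμ' hμ' ha i 0
  rw [shiftT_lead_low _ _ _ (N_pos D i) _ (fun r hr => pm_low D (μ + μ') i r hr)] at h
  simpa using h

lemma imgHom_cartan_comm (g g' : TQAGen D) (hg : IsCartanGen D g) (hg' : IsCartanGen D g') :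
    Commute (img D μ μ' a g) (img D μ μ' a g') := by
  set s : Set (U D 0 (μ + μ')) :=
    {x | ∃ g, IsCartanGen D g ∧ x = mkU D 0 (μ + μ') (FreeAlgebra.ι ℂ g)} with hs
  have hsub : ∀ g, IsCartanGen D g → mkU D 0 (μ + μ') (FreeAlgebra.ι ℂ g) ∈ Algebra.adjoin ℂ s :=
    fun g hg => Algebra.subset_adjoin ⟨g, hg, rfl⟩
  have hmem : ∀ g, IsCartanGen D g → img D μ μ' a g ∈ Algebra.adjoin ℂ s := by
    intro g hg
    cases g with
    | xp i r => exact hg.elim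
    | xm i r => exact hg.elim
    | pp i r => exact shiftT_mem _ _ _ _ _ (fun r => hsub (TQAGen.pp i r) trivial) r
    | pm i r => exact shiftT_mem _ _ _ _ _ (fun r => hsub (TQAGen.pm i r) trivial) r
    | ppInv i => exact hsub (TQAGen.ppInv i) trivial
    | pmInv i => exact Subalgebra.smul_mem _ (hsub (TQAGen.pmInv i) trivial) _
    | hh i m =>
      exact Subalgebra.sub_mem _ (hsub (TQAGen.hh i m) trivial) (Subalgebra.algebraMap_mem _ _)
  refine Algebra.commute_of_mem_adjoin_of_forall_mem_commute (hmem g' hg') fun x hx => ?_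
  refine (Algebra.commute_of_mem_adjoin_of_forall_mem_commute (hmem g hg) fun y hy => ?_).symm
  obtain ⟨g1, h1, rfl⟩ := hx
  obtain ⟨g2, h2, rfl⟩ := hy
  have := mkU_rel D 0 (μ + μ') (Rel.cartan_comm g1 g2 h1 h2)
  rwa [map_mul, map_mul] at this

lemma pp_logDer (μm : D.I0 → ℤ) (i : D.I0) :
    LogDer (fun k => (D.qd i * ((k : ℂ) + 1)) • hgen D 0 μm i ((k : ℤ) + 1)) (pp D 0 μm i) := by
  refine logDer_of_rec _ _ (pp_low D μm i) fun m => ?_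
  have h := mkU_rel D 0 μm (Rel.pp_exp i m)
  simp only [map_smul, map_sum, map_mul, Finset.smul_sum, smul_smul, Pi.zero_apply, neg_zero,
    zero_add] at h
  simp only [smul_mul_assoc]
  exact h

lemma pm_logDer (μm : D.I0 → ℤ) (i : D.I0) :
    LogDer (fun k => (-(D.qd i * ((k : ℂ) + 1))) • hgen D 0 μm i (-((k : ℤ) + 1)))
      (fun r => pm D 0 μm i (μm i - r)) := by
  refine logDer_of_rec _ _ (pm_low D μm i) fun m => ?_
  have h := mkU_rel D 0 μm (Rel.pm_exp i m)
  simp only [map_smul, map_sum, map_mul, Finset.smul_sum, smul_smul, neg_smul, map_neg] at h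
  rw [neg_eq_iff_eq_neg, ← Finset.sum_neg_distrib] at h
  simp only [smul_mul_assoc]
  refine h.trans (Finset.sum_congr rfl fun k _ => ?_)
  rw [show μm i - ((m : ℤ) + 1 - (k + 1)) = μm i - (m + 1) + (k + 1) by ring]
  exact (neg_smul (D.qd i * ((k : ℂ) + 1)) _).symm

lemma imgHom_H_pos (i : D.I0) (k : ℕ) :
    (D.qd i * ((k : ℂ) + 1)) • imgHom D μ μ' a (gH D i ((k : ℤ) + 1)) =
      (D.qd i * ((k : ℂ) + 1)) • hgen D 0 (μ + μ') i ((k : ℤ) + 1) - algebraMap ℂ _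
        ((nshift D μ' i : ℂ) * D.N i * (if D.N i ∣ k + 1 then a ^ (k + 1) else 0)) := by
  have hq := qd_ne_zero D i
  have hk : (k : ℂ) + 1 ≠ 0 := by exact_mod_cast Nat.succ_ne_zero k
  have e : (D.N i : ℤ) ∣ (k : ℤ) + 1 ↔ D.N i ∣ k + 1 := by exact_mod_cast Int.natCast_dvd_natCast
  rw [imgHom_H, smul_sub, Algebra.algebraMap_eq_smul_one, Algebra.algebraMap_eq_smul_one,
    smul_smul]
  congr 2
  simp only [hTrans, e]
  split_ifs
  · have : a ^ ((k : ℤ) + 1) = a ^ (k + 1) := by exact_mod_cast zpow_natCast a (k + 1)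
    rw [this]
    push_cast
    field_simp
  · simp

lemma imgHom_H_neg (i : D.I0) (k : ℕ) :
    (-(D.qd i * ((k : ℂ) + 1))) • imgHom D μ μ' a (gH D i (-((k : ℤ) + 1))) =
      (-(D.qd i * ((k : ℂ) + 1))) • hgen D 0 (μ + μ') i (-((k : ℤ) + 1)) - algebraMap ℂ _
        ((nshift D μ' i : ℂ) * D.N i * (if D.N i ∣ k + 1 then a⁻¹ ^ (k + 1) else 0)) := by
  have hq := qd_ne_zero D i
  have hk : (k : ℂ) + 1 ≠ 0 := by exact_mod_cast Nat.succ_ne_zero k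
  have e : (D.N i : ℤ) ∣ -((k : ℤ) + 1) ↔ D.N i ∣ k + 1 := by
    rw [dvd_neg]; exact_mod_cast Int.natCast_dvd_natCast
  rw [imgHom_H, smul_sub, Algebra.algebraMap_eq_smul_one, Algebra.algebraMap_eq_smul_one,
    smul_smul]
  congr 2
  simp only [hTrans, e]
  split_ifs
  · have : a ^ (-((k : ℤ) + 1)) = a⁻¹ ^ (k + 1) := by
      rw [zpow_neg, inv_pow]; congr 1
    rw [this]
    push_cast
    rw [mul_div_assoc', div_eq_iff (mul_ne_zero (neg_ne_zero.2 hk) hq)]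
    ring
  · simp

/-! ### Verification of the relations -/

lemma imgHom_rel (hA : ∀ i, D.Ciσ i ≠ -1)
    (hΛμ' : ∀ i, D.fixed i → (D.M : ℤ) ∣ μ' i) (hμ' : ∀ i, μ' i ≤ 0) (ha : a ≠ 0)
    ⦃x y : FA D⦄ (h : Rel D 0 μ x y) : imgHom D μ μ' a x = imgHom D μ μ' a y := by
  have hb : ∀ i, (-(a ^ D.N i)) ^ nshift D μ' i ≠ 0 := fun i =>
    pow_ne_zero _ (neg_ne_zero.2 (pow_ne_zero _ ha))
  cases h with
  | x_supp ε i r hr =>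
    rw [imgHom_X, map_zero]
    refine shiftT_ind _ _ (fun F => ∀ r : ℤ, ¬ ((D.N i : ℤ) ∣ r) → F r = 0) ?_ _ _ ?_ r hr
    · intro F hF r hr
      simp only
      rw [hF r hr, hF _ (fun hd => hr ((dvd_sub_self_right).1 hd)), smul_zero, sub_zero]
    · intro r hr
      simpa [xx] using mkU_rel D 0 (μ + μ') (Rel.x_supp ε i r hr)
  | h_supp i m hm =>
    have h1 := mkU_rel D 0 (μ + μ') (Rel.h_supp i m hm)
    have h2 : hTrans D μ' a i m = 0 := by
      rcases hm with hm | rfl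
      · exact if_neg hm
      · simp [hTrans]
    rw [imgHom_H, h2, map_zero, sub_zero, map_zero, hgen, h1, map_zero]
  | pp_supp i r hr =>
    rw [imgHom_Pp, map_zero]
    exact shiftT_supp_low _ _ _ _ (pp_low D _ i) r (by simpa using hr)
  | pm_supp i r hr =>
    have h1 := imgHom_Pm_reflect D μ μ' a hΛμ' hμ' ha i (μ i - r)
    rw [sub_sub_cancel] at h1
    rw [h1, map_zero, shiftT_supp_low _ _ _ _ (pm_low D (μ + μ') i) _ (by omega), smul_zero]
  | cartan_comm g g' hg hg' =>
    rw [map_mul, map_mul, imgHom_ι, imgHom_ι]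
    exact imgHom_cartan_comm D μ μ' a g g' hg hg'
  | pp_inv_l i =>
    have h1 := mkU_rel D 0 (μ + μ') (Rel.pp_inv_l i)
    simp only [map_mul, map_one, Pi.zero_apply, neg_zero] at h1 ⊢
    rw [imgHom_Pp_lead, imgHom_PpInv]
    exact h1
  | pp_inv_r i =>
    have h1 := mkU_rel D 0 (μ + μ') (Rel.pp_inv_r i)
    simp only [map_mul, map_one, Pi.zero_apply, neg_zero] at h1 ⊢
    rw [imgHom_Pp_lead, imgHom_PpInv]
    exact h1
  | pm_inv_l i =>
    have h1 := mkU_rel D 0 (μ + μ') (Rel.pm_inv_l i)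
    simp only [map_mul, map_one] at h1 ⊢
    rw [imgHom_Pm_lead D μ μ' a hΛμ' hμ' ha, imgHom_PmInv, smul_mul_smul_comm,
      inv_mul_cancel₀ (hb i), one_smul]
    exact h1
  | pm_inv_r i =>
    have h1 := mkU_rel D 0 (μ + μ') (Rel.pm_inv_r i)
    simp only [map_mul, map_one] at h1 ⊢
    rw [imgHom_Pm_lead D μ μ' a hΛμ' hμ' ha, imgHom_PmInv, smul_mul_smul_comm,
      mul_inv_cancel₀ (hb i), one_smul]
    exact h1
  | pp_exp i m =>
    have h1 := logDer_shiftT a (D.N i) (nshift D μ' i) (N_pos D i) _ _ (pp_low D (μ + μ') i)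
      (pp_logDer D (μ + μ') i) (m + 1) (m + 1) (by simp)
    simp only [← imgHom_H_pos, ← imgHom_Pp] at h1
    simp only [map_smul, map_sum, map_mul, Finset.smul_sum, smul_smul, Pi.zero_apply, neg_zero,
      zero_add]
    simp only [smul_mul_assoc] at h1
    exact_mod_cast h1
  | pm_exp i m =>
    have h1 := logDer_shiftT a⁻¹ (D.N i) (nshift D μ' i) (N_pos D i) _ _ (pm_low D (μ + μ') i)
      (pm_logDer D (μ + μ') i) (m + 1) (m + 1) (by simp)
    simp only [← imgHom_H_neg] at h1
    -- Multiply by the leading scalar to recognize the images of `φ^-_{i,r}`.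
    have h2 := congrArg (fun x => (-(a ^ D.N i)) ^ nshift D μ' i • x) h1
    simp only [Finset.smul_sum] at h2
    rw [smul_comm, ← imgHom_Pm_reflect D μ μ' a hΛμ' hμ' ha] at h2
    simp only [← mul_smul_comm, ← imgHom_Pm_reflect D μ μ' a hΛμ' hμ' ha] at h2
    simp only [map_smul, map_sum, map_mul, Finset.smul_sum, smul_smul, neg_smul, map_neg]
    rw [neg_eq_iff_eq_neg, ← Finset.sum_neg_distrib]
    simp only [smul_mul_assoc] at h2
    push_cast at h2
    refine h2.trans (Finset.sum_congr rfl fun k _ => ?_)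
    rw [show μ i - ((m : ℤ) + 1 - (k + 1)) = μ i - (m + 1) + (k + 1) by ring]
    exact neg_smul (D.qd i * ((k : ℂ) + 1)) (imgHom D μ μ' a (gH D i (-((k : ℤ) + 1))) *
      imgHom D μ μ' a (gPm D i (μ i - (m + 1) + (k + 1))))
  | lead_conj_p ε i j r =>
    simp only [map_mul, map_smul, Pi.zero_apply, neg_zero]
    rw [imgHom_Pp_lead, imgHom_X]
    generalize hc : D.q ^ (sg ε * ∑ s ∈ Finset.range D.M, D.Cs i j s) = c
    refine shiftT_ind _ _ (fun F => ∀ r : ℤ, pp D 0 (μ + μ') i 0 * F r =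
      c • (F r * pp D 0 (μ + μ') i 0)) ?_ _ _ ?_ r
    · intro F hF r
      simp only [mul_sub, sub_mul, mul_smul_comm, smul_mul_assoc, hF]
      module
    · intro r
      have h1 := mkU_rel D 0 (μ + μ') (Rel.lead_conj_p ε i j r)
      simp only [map_mul, map_smul, Pi.zero_apply, neg_zero] at h1
      rw [← hc]
      exact h1
  | lead_conj_m ε i j r =>
    simp only [map_mul, map_smul]
    rw [imgHom_Pm_lead D μ μ' a hΛμ' hμ' ha, imgHom_X, smul_mul_assoc, mul_smul_comm,
      smul_comm (D.q ^ _)]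
    congr 1
    generalize hc : D.q ^ (-(sg ε) * ∑ s ∈ Finset.range D.M, D.Cs i j s) = c
    refine shiftT_ind _ _ (fun F => ∀ r : ℤ, pm D 0 (μ + μ') i ((μ + μ') i) * F r =
      c • (F r * pm D 0 (μ + μ') i ((μ + μ') i))) ?_ _ _ ?_ r
    · intro F hF r
      simp only [mul_sub, sub_mul, mul_smul_comm, smul_mul_assoc, hF]
      module
    · intro r
      have h1 := mkU_rel D 0 (μ + μ') (Rel.lead_conj_m ε i j r)
      simp only [map_mul, map_smul] at h1
      rw [← hc]
      exact h1
  | h_x ε i j m r hm =>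
    simp only [map_mul, map_smul, map_sub]
    rw [imgHom_H, imgHom_X, imgHom_X, sub_mul, mul_sub, Algebra.commutes, sub_sub_sub_cancel_right]
    generalize hc : (((sg ε : ℤ) : ℂ) * D.hxCoef i j m) = c
    refine shiftT_ind _ _ (fun F => ∀ r : ℤ, hgen D 0 (μ + μ') i m * F r -
      F r * hgen D 0 (μ + μ') i m = c • F (m + r)) ?_ _ _ ?_ r
    · intro F hF r
      have h1 := hF r
      have h2 := hF (r - D.N j)
      rw [← add_sub_assoc] at h2
      simp only [mul_sub, sub_mul, mul_smul_comm, smul_mul_assoc, smul_sub, smul_comm c, ← h1,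
        ← h2]
      module
    · intro r
      have h1 := mkU_rel D 0 (μ + μ') (Rel.h_x ε i j m r hm)
      simp only [map_mul, map_smul, map_sub] at h1
      rw [← hc]
      exact h1
  | xp_xm i j r r' =>
    have h1 : ∀ r r', xp D 0 (μ + μ') i r * xm D 0 (μ + μ') j r' -
        xm D 0 (μ + μ') j r' * xp D 0 (μ + μ') i r =
        if i = j ∧ ((D.N i : ℤ) ∣ r') then
          (D.qd i)⁻¹ • (pp D 0 (μ + μ') i (r + r') - pm D 0 (μ + μ') i (r + r')) else 0 := by
      intro r r'
      have h := mkU_rel D 0 (μ + μ') (Rel.xp_xm i j r r')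
      rw [apply_ite (mkU D 0 (μ + μ'))] at h
      simp only [map_mul, map_smul, map_sub, map_zero] at h
      exact h
    rw [apply_ite (imgHom D μ μ' a)]
    simp only [map_mul, map_smul, map_sub, map_zero, imgHom_Xp, imgHom_Xm, imgHom_Pp, imgHom_Pm]
    by_cases hij : i = j
    · subst hij
      simp only [true_and] at h1 ⊢
      induction nshift D μ' i generalizing r r' with
      | zero => exact h1 r r'
      | succ n ih =>
        have h2 := ih r r'
        have h3 := ih r (r' - D.N i)
        simp only [dvd_sub_self_right, ← add_sub_assoc] at h3
        simp only [shiftT_succ]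
        rw [commutator_step, h2, h3]
        split_ifs
        · module
        · simp
    · simp only [hij, false_and, if_false] at h1 ⊢
      refine shiftT_ind _ _ (fun F => ∀ r' : ℤ, xp D 0 (μ + μ') i r * F r' -
        F r' * xp D 0 (μ + μ') i r = 0) ?_ _ _ (h1 r) r'
      intro F hF r'
      simp only
      rw [commutator_step, hF, hF, smul_zero, sub_zero]
  | xx ε i j r r' =>
    simp only [map_mul, map_smul, map_sum, imgHom_X]
    refine quad_shiftT _ _ (fun K : Finset (Fin D.M) => (K.card : ℤ)) _ _ _ _ _ _ _ _ _ ?_ r r'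
    intro r r'
    have h1 := mkU_rel D 0 (μ + μ') (Rel.xx ε i j r r')
    simp only [map_mul, map_smul, map_sum] at h1
    exact h1
  | serre1 ε i j hij hne k m1 m2 =>
    simp only [map_mul, map_smul, map_sum, map_add, map_sub, map_zero, imgHom_X, serreS]
    refine serre_shiftT (D.serreC i j) _ _ (fun t => (D.pa i j t : ℤ))
      (fun t => (D.pb i j t : ℤ)) _ _ _ _ _ _ _ _ ?_ k m1 m2
    intro k m1 m2
    have h1 := mkU_rel D 0 (μ + μ') (Rel.serre1 ε i j hij hne k m1 m2)
    simp only [map_mul, map_smul, map_sum, map_add, map_sub, map_zero, serreS] at h1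
    exact h1
  | serre2 ε i hii m => exact absurd hii (hA i)
  | serre3 ε i hii m => exact absurd hii (hA i)

end Images

/-- **Existence of the shift homomorphism.**  Let `ĝ^σ` be a twisted affine type other
than `A₂ₙ⁽²⁾`, `μ ∈ Λ`, `μ' ∈ -Λ⁺`, `a ∈ ℂ^*`.  The assignment
`x_i^+(z) ↦ x_i^+(z)`, `x_i^-(z) ↦ (1-(az⁻¹)^{ι_i})^{n_i(μ')} x_i^-(z)`,
`φ_i^±(z) ↦ (1-(az)^{ι_i})^{n_i(μ')} φ_i^±(z)` on Drinfeld currents defines an algebra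
homomorphism `ι_{μ,μ',a} : 𝒰_q^μ(ĝ^σ) → 𝒰_q^{μ+μ'}(ĝ^σ)` (written below in modes,
using `(1-w)^n = ∑_k (n choose k)(-1)^k w^k`). -/
theorem shift_homomorphism (hA : ∀ i, D.Ciσ i ≠ -1)
    (μ μ' : D.I0 → ℤ)
    (hΛμ : ∀ i, D.fixed i → (D.M : ℤ) ∣ μ i)
    (hΛμ' : ∀ i, D.fixed i → (D.M : ℤ) ∣ μ' i)
    (hμ' : ∀ i, μ' i ≤ 0) (a : ℂ) (ha : a ≠ 0) :
    ∃ f : U D 0 μ →ₐ[ℂ] U D 0 (μ + μ'),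
      (∀ (i : D.I0) (m : ℤ), f (xp D 0 μ i m) = xp D 0 (μ + μ') i m) ∧
      (∀ (i : D.I0) (m : ℤ), f (xm D 0 μ i m) =
        ∑ k ∈ Finset.range (nshift D μ' i + 1),
          (((nshift D μ' i).choose k : ℂ) * (-1) ^ k * a ^ (iot D i * k)) •
            xm D 0 (μ + μ') i (m - (iot D i * k : ℕ))) ∧
      (∀ (i : D.I0) (r : ℤ), f (pp D 0 μ i r) =
        ∑ k ∈ Finset.range (nshift D μ' i + 1),
          (((nshift D μ' i).choose k : ℂ) * (-1) ^ k * a ^ (iot D i * k)) •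
            pp D 0 (μ + μ') i (r - (iot D i * k : ℕ))) ∧
      (∀ (i : D.I0) (r : ℤ), f (pm D 0 μ i r) =
        ∑ k ∈ Finset.range (nshift D μ' i + 1),
          (((nshift D μ' i).choose k : ℂ) * (-1) ^ k * a ^ (iot D i * k)) •
            pm D 0 (μ + μ') i (r - (iot D i * k : ℕ))) := by
  have hf : ∀ x, RingQuot.liftAlgHom ℂ
      ⟨imgHom D μ μ' a, imgHom_rel D μ μ' a hA hΛμ' hμ' ha⟩ (mkU D 0 μ x) =
        imgHom D μ μ' a x := fun x => RingQuot.liftAlgHom_mkAlgHom_apply ..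
  refine ⟨RingQuot.liftAlgHom ℂ ⟨imgHom D μ μ' a, imgHom_rel D μ μ' a hA hΛμ' hμ' ha⟩,
    fun i m => ?_, fun i m => ?_, fun i r => ?_, fun i r => ?_⟩
  · rw [xp, hf, imgHom_Xp]
  · rw [xm, hf, imgHom_Xm, shiftT_eq_sum]
    rfl
  · rw [pp, hf, imgHom_Pp, shiftT_eq_sum]
    rfl
  · rw [pm, hf, imgHom_Pm, shiftT_eq_sum]
    rfl

end TQA
end
end
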